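/- Let δ > 0 and let Σ_Z ∈ ℝ^{d×d} be symmetric positive definite. For each α ∈ (0,1), let Y_α and Z be ℝ^d-valued random vectors on a common probability space, where Z is Gaussian with mean 0 and covariance Σ_Z, and suppose E‖Y_α − Z‖ ≤ δ · α^{1/2} · (log(1/α))^{1/2}. Then there exists α₀ ∈ (0,1) such that for all α ∈ (0,α₀), all a > 0, and all ζ ∈ ℝ^d with ‖ζ‖ = 1: |P(⟨Y_α, ζ⟩ > a) − P(⟨Z, ζ⟩ > a)| ≤ (8·‖Σ_Z‖_op^{1/2} + 1)·δ^{1/2} · α^{1/4} (log(1/α))^{1/2} / a. -/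

import Mathlib

open MeasureTheory Matrix
open scoped RealInnerProductSpace NNReal

/-- The operator norm of a matrix, induced by the Euclidean norm. -/
noncomputable def l2OpNorm {d : ℕ} (A : Matrix (Fin d) (Fin d) ℝ) : ℝ :=
  ‖LinearMap.toContinuousLinearMap (Matrix.toEuclideanLin A)‖

/-!
Fix `α`, put `η = √δ α^{1/4}`, `L = log (1/α)` and `ε = a η`. If `⟪Y, ζ⟫` and `⟪Z, ζ⟫` lie on
different sides of `a`, then either `‖Y - Z‖ ≥ ε` or `⟪Z, ζ⟫` lies within `ε` of `a`.

* By Markov's inequality the first event has probability at most `η √L / a`.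
* The variable `⟪Z, ζ⟫` is a centred real Gaussian of variance `v = ⟪ζ, Σ ζ⟫ ≤ ‖Σ‖`. Once
  `η ≤ 1/2`, the interval of length `ε` next to `a` lies in `[a/2, ∞)`, where `exp (-y) ≤ 1/y`
  bounds the density by `8 √v / a²` (`gaussianPDFReal_le_of_half_le`). Hence the second event has
  probability at most `8 √v η / a`, and `L ≥ 1` for small `α`.

Letting the width `ε` scale with `a` is what gives the factor `1/a` in both terms, uniformly in
`a > 0`.
-/

open ProbabilityTheory in
/-- The bound does not degenerate as `v → 0`: it follows from `exp (-y) ≤ 1/y` with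
`y = a² / (8 v)`. -/
lemma gaussianPDFReal_le_of_half_le {v : ℝ≥0} (hv : v ≠ 0) {a x : ℝ} (ha : 0 < a)
    (hx : a / 2 ≤ x) : gaussianPDFReal 0 v x ≤ 8 * √(v : ℝ) / a ^ 2 := by
  have hv0 : (0 : ℝ) < v := by exact_mod_cast pos_iff_ne_zero.2 hv
  set w : ℝ := (v : ℝ)
  have hy : 0 < a ^ 2 / (8 * w) := by positivity
  have h1 : Real.exp (-(x - 0) ^ 2 / (2 * w)) ≤ 8 * w / a ^ 2 := by
    have h2 : a ^ 2 / (8 * w) ≤ Real.exp (a ^ 2 / (8 * w)) := by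
      linarith [Real.add_one_le_exp (a ^ 2 / (8 * w))]
    calc Real.exp (-(x - 0) ^ 2 / (2 * w)) ≤ Real.exp (-(a ^ 2 / (8 * w))) := by
          apply Real.exp_le_exp.2
          have e : -(a ^ 2 / (8 * w)) = -(a / 2) ^ 2 / (2 * w) := by field_simp; norm_num
          rw [e]
          gcongr
          linarith
      _ = (Real.exp (a ^ 2 / (8 * w)))⁻¹ := Real.exp_neg _
      _ ≤ (a ^ 2 / (8 * w))⁻¹ := inv_anti₀ hy h2
      _ = 8 * w / a ^ 2 := by rw [inv_div]
  have h3 : (√(2 * Real.pi * w))⁻¹ ≤ (√w)⁻¹ := by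
    apply inv_anti₀ (Real.sqrt_pos.2 hv0)
    apply Real.sqrt_le_sqrt
    nlinarith [Real.pi_gt_three]
  have hs : (√w)⁻¹ * w = √w := by
    nth_rewrite 2 [← Real.mul_self_sqrt hv0.le]
    rw [← mul_assoc, inv_mul_cancel₀ (Real.sqrt_pos.2 hv0).ne', one_mul]
  calc gaussianPDFReal 0 v x
      = (√(2 * Real.pi * w))⁻¹ * Real.exp (-(x - 0) ^ 2 / (2 * w)) := rfl
    _ ≤ (√w)⁻¹ * (8 * w / a ^ 2) := by gcongr
    _ = 8 * ((√w)⁻¹ * w) / a ^ 2 := by ring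
    _ = 8 * √w / a ^ 2 := by rw [hs]

open ProbabilityTheory in
lemma gaussianReal_Ioc_le {v : ℝ≥0} (hv : v ≠ 0) {a l ε : ℝ} (ha : 0 < a) (hl : a / 2 ≤ l)
    (hε : 0 ≤ ε) :
    (gaussianReal 0 v).real (Set.Ioc l (l + ε)) ≤ 8 * √(v : ℝ) / a ^ 2 * ε := by
  have h : gaussianReal 0 v (Set.Ioc l (l + ε)) ≤ ENNReal.ofReal (8 * √(v : ℝ) / a ^ 2 * ε) := by
    rw [gaussianReal_apply 0 hv]
    calc ∫⁻ x in Set.Ioc l (l + ε), gaussianPDF 0 v x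
        ≤ ∫⁻ _ in Set.Ioc l (l + ε), ENNReal.ofReal (8 * √(v : ℝ) / a ^ 2) := by
          apply setLIntegral_mono measurable_const
          intro x hx
          exact ENNReal.ofReal_le_ofReal
            (gaussianPDFReal_le_of_half_le hv ha (hl.trans hx.1.le))
      _ = ENNReal.ofReal (8 * √(v : ℝ) / a ^ 2 * ε) := by
          rw [setLIntegral_const, Real.volume_Ioc, add_sub_cancel_left,
            ENNReal.ofReal_mul (by positivity)]
  exact ENNReal.toReal_le_of_le_ofReal (by positivity) h

open ProbabilityTheory in
/-- A one-dimensional marginal of a centred Gaussian vector, identified through its characteristic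
function. -/
lemma map_inner_eq_gaussianReal {d : ℕ} {SZ : Matrix (Fin d) (Fin d) ℝ} {Ω : Type}
    [MeasurableSpace Ω] {μ : Measure Ω} [IsProbabilityMeasure μ]
    {Z : Ω → EuclideanSpace ℝ (Fin d)} (hZm : Measurable Z)
    (hZ : ∀ t : EuclideanSpace ℝ (Fin d),
      (∫ ω, Complex.exp (Complex.I * ((⟪t, Z ω⟫ : ℝ) : ℂ)) ∂μ)
        = Complex.exp (-(1/2 : ℂ) * ((⟪t, Matrix.toEuclideanLin SZ t⟫ : ℝ) : ℂ)))
    (ζ : EuclideanSpace ℝ (Fin d)) {v : ℝ≥0}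
    (hv : (v : ℝ) = ⟪ζ, Matrix.toEuclideanLin SZ ζ⟫) :
    μ.map (fun ω => ⟪Z ω, ζ⟫) = gaussianReal 0 v := by
  have hm : Measurable fun ω => ⟪Z ω, ζ⟫ := by fun_prop
  have := Measure.isProbabilityMeasure_map (μ := μ) hm.aemeasurable
  apply Measure.ext_of_charFun
  ext t
  rw [charFun_gaussianReal, charFun_apply_real, integral_map hm.aemeasurable (by fun_prop)]
  have h := hZ (t • ζ)
  convert h using 1
  · congr 1
    ext ω
    rw [real_inner_smul_left, real_inner_comm]
    push_cast
    ring_nf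
  · rw [map_smul, real_inner_smul_left, real_inner_smul_right, ← hv]
    push_cast
    ring_nf

lemma inner_toEuclideanLin_le {d : ℕ} (SZ : Matrix (Fin d) (Fin d) ℝ)
    {ζ : EuclideanSpace ℝ (Fin d)} (hζ : ‖ζ‖ = 1) :
    ⟪ζ, Matrix.toEuclideanLin SZ ζ⟫ ≤ l2OpNorm SZ := by
  have h := (LinearMap.toContinuousLinearMap (Matrix.toEuclideanLin SZ)).le_opNorm ζ
  have h2 := real_inner_le_norm ζ (Matrix.toEuclideanLin SZ ζ)
  rw [hζ, one_mul] at h2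
  rw [hζ, mul_one] at h
  exact h2.trans h

lemma inner_toEuclideanLin_pos {d : ℕ} {SZ : Matrix (Fin d) (Fin d) ℝ} (hSZ : SZ.PosDef)
    {ζ : EuclideanSpace ℝ (Fin d)} (hζ : ‖ζ‖ = 1) :
    0 < ⟪ζ, Matrix.toEuclideanLin SZ ζ⟫ := by
  have hne : WithLp.ofLp ζ ≠ 0 := by
    intro h
    have : ζ = 0 := by ext i; exact congrFun h i
    simp [this] at hζ
  have := hSZ.dotProduct_mulVec_pos hne
  simpa [EuclideanSpace.inner_eq_star_dotProduct, dotProduct_comm] using this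

/-- If two real random variables lie on different sides of `a`, they are at distance at least `ε`
or the second one lies within `ε` of `a`, on one side or the other. -/
lemma abs_prob_sub_le {Ω : Type} [MeasurableSpace Ω] (μ : Measure Ω) [IsProbabilityMeasure μ]
    (U X : Ω → ℝ) (D : Ω → ℝ) (hD : ∀ ω, |U ω - X ω| ≤ D ω) {a ε p q : ℝ}
    (h₁ : μ.real (X ⁻¹' Set.Ioc (a - ε) a) ≤ p) (h₂ : μ.real (X ⁻¹' Set.Ioc a (a + ε)) ≤ p)
    (h₃ : μ.real {ω | ε ≤ D ω} ≤ q) :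
    |μ.real {ω | a < U ω} - μ.real {ω | a < X ω}| ≤ p + q := by
  have key : ∀ A B C E : Set Ω, A ⊆ B ∪ C ∪ E → μ.real A ≤ μ.real B + μ.real C + μ.real E :=
    fun A B C E h => (measureReal_mono h).trans
      ((measureReal_union_le _ _).trans (by gcongr; exact measureReal_union_le _ _))
  have k₁ := key {ω | a < U ω} {ω | a < X ω} (X ⁻¹' Set.Ioc (a - ε) a) {ω | ε ≤ D ω} (by
    intro ω h
    have := abs_le.1 (hD ω)
    by_contra hc
    simp only [Set.mem_union, Set.mem_ofPred_eq, Set.mem_preimage, Set.mem_Ioc] at h hc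
    grind)
  have k₂ := key {ω | a < X ω} {ω | a < U ω} (X ⁻¹' Set.Ioc a (a + ε)) {ω | ε ≤ D ω} (by
    intro ω h
    have := abs_le.1 (hD ω)
    by_contra hc
    simp only [Set.mem_union, Set.mem_ofPred_eq, Set.mem_preimage, Set.mem_Ioc] at h hc
    grind)
  rw [abs_le]
  constructor <;> linarith

/-- Suppose for each `α ∈ (0,1)` the random vectors `Y_α, Z` on a common
probability space satisfy `E‖Y_α − Z‖ ≤ δ α^{1/2} (log(1/α))^{1/2}`, with `Z` centered Gaussian
with covariance `Σ_Z ≻ 0`. Then for some `α₀ ∈ (0,1)` and all `α ∈ (0,α₀)`, `a > 0` and unit `ζ`,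
`|P(⟨Y_α,ζ⟩ > a) − P(⟨Z,ζ⟩ > a)| ≤ (8‖Σ_Z‖_op^{1/2}+1)·δ^{1/2}·α^{1/4}(log(1/α))^{1/2}/a`. -/
theorem stmt6 {d : ℕ} (δ : ℝ) (hδ : 0 < δ)
    (SZ : Matrix (Fin d) (Fin d) ℝ) (hSZ : SZ.PosDef)
    (Ω : ℝ → Type) [∀ α, MeasurableSpace (Ω α)]
    (μ : ∀ α, Measure (Ω α)) [∀ α, IsProbabilityMeasure (μ α)]
    (Y : ∀ α, Ω α → EuclideanSpace ℝ (Fin d)) (Z : ∀ α, Ω α → EuclideanSpace ℝ (Fin d))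
    (hYm : ∀ α, Measurable (Y α)) (hZm : ∀ α, Measurable (Z α))
    (hZgauss : ∀ α ∈ Set.Ioo (0:ℝ) 1, ∀ t : EuclideanSpace ℝ (Fin d),
      (∫ ω, Complex.exp (Complex.I * ((⟪t, Z α ω⟫ : ℝ) : ℂ)) ∂(μ α))
        = Complex.exp (-(1/2 : ℂ) * ((⟪t, Matrix.toEuclideanLin SZ t⟫ : ℝ) : ℂ)))
    (hint : ∀ α ∈ Set.Ioo (0:ℝ) 1, Integrable (fun ω => Y α ω - Z α ω) (μ α))
    (hclose : ∀ α ∈ Set.Ioo (0:ℝ) 1,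
      (∫ ω, ‖Y α ω - Z α ω‖ ∂(μ α)) ≤ δ * Real.sqrt α * Real.sqrt (Real.log (1/α))) :
    ∃ α₀ ∈ Set.Ioo (0:ℝ) 1, ∀ α ∈ Set.Ioo (0:ℝ) α₀, ∀ a : ℝ, 0 < a →
      ∀ ζ : EuclideanSpace ℝ (Fin d), ‖ζ‖ = 1 →
      |((μ α) {ω | a < ⟪Y α ω, ζ⟫}).toReal - ((μ α) {ω | a < ⟪Z α ω, ζ⟫}).toReal|
        ≤ (8 * Real.sqrt (l2OpNorm SZ) + 1) * Real.sqrt δ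
            * (α ^ ((1:ℝ)/4) * Real.sqrt (Real.log (1/α)) / a) := by
  -- `α ≤ exp (-1)` gives `log (1/α) ≥ 1`, and `α ≤ (16 δ²)⁻¹` gives `√δ α^{1/4} ≤ 1/2`.
  refine ⟨min (Real.exp (-1)) (16 * δ ^ 2)⁻¹, ⟨by positivity,
    (min_le_left _ _).trans_lt (by simp)⟩, ?_⟩
  rintro α ⟨hα, hα'⟩ a ha ζ hζ
  have hαe : α < Real.exp (-1) := hα'.trans_le (min_le_left _ _)
  have hαδ : α < (16 * δ ^ 2)⁻¹ := hα'.trans_le (min_le_right _ _)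
  have hα1 : α ∈ Set.Ioo (0 : ℝ) 1 := ⟨hα, hαe.trans (by simp)⟩
  have hL : 1 ≤ √(Real.log (1 / α)) := by
    rw [Real.one_le_sqrt, one_div, Real.log_inv]
    linarith [(Real.log_lt_iff_lt_exp hα).2 hαe]
  set L := √(Real.log (1 / α))
  set r := α ^ ((1 : ℝ) / 4)
  have hr : 0 < r := Real.rpow_pos_of_pos hα _
  have hr2 : r ^ 2 = √α := by
    rw [Real.sqrt_eq_rpow, ← Real.rpow_natCast, ← Real.rpow_mul hα.le]
    norm_num
  have hsδ : 0 < √δ := Real.sqrt_pos.2 hδ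
  have hsδ2 : √δ ^ 2 = δ := Real.sq_sqrt hδ.le
  have hη : √δ * r ≤ 1 / 2 := by
    have h4 : (√δ * r) ^ 4 ≤ (1 / 2) ^ 4 := by
      have e : (√δ * r) ^ 4 = (√δ ^ 2) ^ 2 * (r ^ 2) ^ 2 := by ring
      rw [e, hsδ2, hr2, Real.sq_sqrt hα.le]
      calc δ ^ 2 * α ≤ δ ^ 2 * (16 * δ ^ 2)⁻¹ := by gcongr
        _ = (1 / 2) ^ 4 := by field_simp; norm_num
    exact le_of_pow_le_pow_left₀ (by norm_num) (by norm_num) h4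
  set η := √δ * r
  have hη0 : 0 < η := by positivity
  have hvpos := inner_toEuclideanLin_pos hSZ hζ
  set v : ℝ≥0 := ⟨⟪ζ, Matrix.toEuclideanLin SZ ζ⟫, hvpos.le⟩
  have hv : v ≠ 0 := fun h => hvpos.ne' (congrArg NNReal.toReal h)
  have hvle : √(v : ℝ) ≤ √(l2OpNorm SZ) := Real.sqrt_le_sqrt (inner_toEuclideanLin_le SZ hζ)
  have hmap := map_inner_eq_gaussianReal (hZm α) (hZgauss α hα1) ζ (v := v) rfl
  have hm : Measurable fun ω => ⟪Z α ω, ζ⟫ := by have := hZm α; fun_prop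
  have hI : ∀ l, a / 2 ≤ l →
      (μ α).real ((fun ω => ⟪Z α ω, ζ⟫) ⁻¹' Set.Ioc l (l + a * η)) ≤
        8 * √(l2OpNorm SZ) * η * L / a := by
    intro l hl
    rw [← map_measureReal_apply hm measurableSet_Ioc, hmap]
    calc _ ≤ 8 * √(v : ℝ) / a ^ 2 * (a * η) := gaussianReal_Ioc_le hv ha hl (by positivity)
      _ = 8 * √(v : ℝ) * η * 1 / a := by field_simp
      _ ≤ 8 * √(l2OpNorm SZ) * η * L / a := by gcongr
  have hmarkov : (μ α).real {ω | a * η ≤ ‖Y α ω - Z α ω‖} ≤ η * L / a := by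
    have h := mul_meas_ge_le_integral_of_nonneg (μ := μ α)
      (Filter.Eventually.of_forall fun ω => norm_nonneg (Y α ω - Z α ω)) (hint α hα1).norm (a * η)
    have h' := h.trans (hclose α hα1)
    have e : δ * √α * L = (a * η) * (η * L / a) := by
      rw [← hr2]
      nth_rewrite 1 [← hsδ2]
      simp only [η]
      field_simp
    rw [e] at h'
    exact le_of_mul_le_mul_left h' (by positivity)
  have hsmall : a * η ≤ a / 2 := by nlinarith
  have h₁ := hI (a - a * η) (by linarith)
  rw [sub_add_cancel] at h₁
  have hfin := abs_prob_sub_le (μ α) (fun ω => ⟪Y α ω, ζ⟫) (fun ω => ⟪Z α ω, ζ⟫)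
    (fun ω => ‖Y α ω - Z α ω‖) (fun ω => by
      rw [← inner_sub_left]
      simpa [hζ] using abs_real_inner_le_norm (Y α ω - Z α ω) ζ) h₁ (hI a (by linarith)) hmarkov
  refine hfin.trans (le_of_eq ?_)
  simp only [η]
  ring
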